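/- If the star expansion G_s of a hypergraph G_H is connected and has at least one edge (i.e., at least one incident vertex–hyperedge pair exists), then the line expansion G_l of G_H is connected; thus line expansion preserves the connectivity of the hypergraph. -/

import Mathlib

/-!
The line expansion is the line graph of the star expansion, an incident pair `(v, e)` being the
edge `{v, e}`. In any graph, consecutive edges of a walk share a vertex, so a walk from an
endpoint of one edge to an endpoint of another joins these two edges in the line graph.
-/

/-- The star expansion of a hypergraph `(V, E, h)`: the bipartite simple graph on `V ⊕ E`
where `v : V` and `e : E` are adjacent iff `h v e`. -/
def starExpansion {V E : Type*} (h : V → E → Prop) : SimpleGraph (V ⊕ E) where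
  Adj x y :=
    match x, y with
    | Sum.inl v, Sum.inr e => h v e
    | Sum.inr e, Sum.inl v => h v e
    | _, _ => False
  symm := by
    refine ⟨?_⟩
    rintro (v | e) (v' | e') hadj <;> simp_all
  loopless := by
    refine ⟨?_⟩
    rintro (v | e) hadj <;> simp_all

/-- The line expansion of a hypergraph `(V, E, h)`: the simple graph whose vertices are the
incident vertex–hyperedge pairs, two distinct pairs being adjacent iff they share the vertex
or the hyperedge. -/
def lineExpansion {V E : Type*} (h : V → E → Prop) :
    SimpleGraph {p : V × E // h p.1 p.2} where
  Adj p q := p ≠ q ∧ (p.1.1 = q.1.1 ∨ p.1.2 = q.1.2)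
  symm := by
    refine ⟨?_⟩
    rintro p q ⟨hne, hor⟩
    exact ⟨hne.symm, hor.imp Eq.symm Eq.symm⟩
  loopless := by
    refine ⟨?_⟩
    rintro p ⟨hne, -⟩
    exact hne rfl

section LineGraph

variable {V : Type*} {G : SimpleGraph V}

theorem lineGraph_reachable_of_mem {e f : G.edgeSet} {x : V} (he : x ∈ e.1) (hf : x ∈ f.1) :
    G.lineGraph.Reachable e f := by
  obtain rfl | hef := eq_or_ne e f
  · exact .refl e
  · exact SimpleGraph.Adj.reachable ⟨hef, x, he, hf⟩

theorem lineGraph_reachable_of_walk {x y : V} (w : G.Walk x y) {e f : G.edgeSet}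
    (he : x ∈ e.1) (hf : y ∈ f.1) : G.lineGraph.Reachable e f := by
  induction w generalizing e with
  | nil => exact lineGraph_reachable_of_mem he hf
  | @cons a b _ hab _ ih =>
    let ab : G.edgeSet := ⟨s(a, b), hab⟩
    have he_ab : G.lineGraph.Reachable e ab := lineGraph_reachable_of_mem he (Sym2.mem_mk_left a b)
    exact he_ab.trans (ih (Sym2.mem_mk_right a b) hf)

theorem lineGraph_preconnected (hG : G.Preconnected) : G.lineGraph.Preconnected := by
  intro e f
  obtain ⟨w⟩ := hG e.1.out.1 f.1.out.1
  exact lineGraph_reachable_of_walk w e.1.out_fst_mem f.1.out_fst_mem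

theorem lineGraph_connected (hG : G.Preconnected) (hne : G.edgeSet.Nonempty) :
    G.lineGraph.Connected :=
  have := hne.to_subtype
  ⟨lineGraph_preconnected hG⟩

end LineGraph

section LineExpansion

variable {V E : Type*} (h : V → E → Prop)

/-- The edge of the star expansion given by an incident pair, that is, a vertex of the line
expansion viewed as a vertex of the line graph of the star expansion. -/
def incidenceEdge (p : {p : V × E // h p.1 p.2}) : (starExpansion h).edgeSet :=
  ⟨s(Sum.inl p.1.1, Sum.inr p.1.2), p.2⟩

theorem incidenceEdge_bijective : Function.Bijective (incidenceEdge h) := by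
  constructor
  · intro p q hpq
    simpa [incidenceEdge, Subtype.ext_iff, Prod.ext_iff] using hpq
  · rintro ⟨⟨v | e, v' | e'⟩, hadj⟩
    · exact hadj.elim
    · exact ⟨⟨(v, e'), hadj⟩, rfl⟩
    · exact ⟨⟨(v', e), hadj⟩, Subtype.ext Sym2.eq_swap⟩
    · exact hadj.elim

theorem lineGraph_adj_incidenceEdge_iff (p q : {p : V × E // h p.1 p.2}) :
    (starExpansion h).lineGraph.Adj (incidenceEdge h p) (incidenceEdge h q) ↔
      (lineExpansion h).Adj p q := by
  have share_iff : (∃ x, x ∈ (incidenceEdge h p).1 ∧ x ∈ (incidenceEdge h q).1) ↔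
      p.1.1 = q.1.1 ∨ p.1.2 = q.1.2 := by
    simp [incidenceEdge]
  rw [SimpleGraph.lineGraph_adj_iff_exists, (incidenceEdge_bijective h).injective.ne_iff, share_iff]
  rfl

/-- The line expansion of a hypergraph as the line graph of its star expansion. -/
noncomputable def lineExpansionIsoLineGraph :
    lineExpansion h ≃g (starExpansion h).lineGraph where
  toEquiv := Equiv.ofBijective (incidenceEdge h) (incidenceEdge_bijective h)
  map_rel_iff' := lineGraph_adj_incidenceEdge_iff h _ _

theorem lineExpansion_connected_general (hconn : (starExpansion h).Connected)
    (hne : ∃ v e, h v e) : (lineExpansion h).Connected := by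
  obtain ⟨v, e, hve⟩ := hne
  exact (lineExpansionIsoLineGraph h).connected_iff.2
    (lineGraph_connected hconn.preconnected ⟨_, (incidenceEdge h ⟨(v, e), hve⟩).2⟩)

end LineExpansion

/-- **Theorem.** If the star expansion of a hypergraph is connected and there exists at least one
incident vertex–hyperedge pair (i.e. the star expansion has at least one edge), then the line
expansion of the hypergraph is connected: line expansion preserves connectivity. -/
theorem lineExpansion_connected
    {V E : Type*} [Fintype V] [Fintype E] [DecidableEq V] [DecidableEq E]
    (h : V → E → Prop) [∀ v e, Decidable (h v e)]
    (hconn : (starExpansion h).Connected) (hne : ∃ v e, h v e) :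
    (lineExpansion h).Connected :=
  lineExpansion_connected_general h hconn hne
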